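/- Let M be a model of PA⁻ + IΣ₁ and let U be an M-ultrafilter on a positive a ∈ M. Then there exist a structure N in the language of arithmetic and an element c ∈ N such that M is a cofinal substructure of N, N = {f(c) : f ∈ M and M ⊨ 'f is a function with domain [0,a)'} (where f(c) denotes the value at c of the function coded by f, computed in N), and the map sending [f]_U to f(c) is an isomorphism from Ult_U(M) onto N. -/

import Mathlib

/- Shared development: first-order arithmetic in the language {0,1,+,·,<},
   the arithmetic hierarchy, fragments of arithmetic, and coded finite
   combinatorics inside models. -/

open FirstOrder Language

namespace ArithFC

/-- Function symbols of the language of arithmetic: 0, 1, +, ·. -/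
inductive Func : ℕ → Type
  | zero : Func 0
  | one : Func 0
  | add : Func 2
  | mul : Func 2

/-- Relation symbols of the language of arithmetic: <. -/
inductive Rel : ℕ → Type
  | lt : Rel 2

/-- The first-order language {0, 1, +, ·, <}. -/
def lang : Language :=
  { Functions := Func, Relations := Rel }

section Instances

variable (M : Type) [lang.Structure M]

instance : Zero M := ⟨Structure.funMap (L := lang) Func.zero ![]⟩
instance : One M := ⟨Structure.funMap (L := lang) Func.one ![]⟩
instance : Add M := ⟨fun x y => Structure.funMap (L := lang) Func.add ![x, y]⟩
instance : Mul M := ⟨fun x y => Structure.funMap (L := lang) Func.mul ![x, y]⟩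
instance : LT M := ⟨fun x y => Structure.RelMap (L := lang) Rel.lt ![x, y]⟩
instance : LE M := ⟨fun x y => x < y ∨ x = y⟩

end Instances

/-- The numeral `n` in a model. -/
def numM (M : Type) [lang.Structure M] : ℕ → M
  | 0 => 0
  | n + 1 => numM M n + 1

/-- `b` is nonstandard (greater than every numeral). -/
def Nonstd {M : Type} [lang.Structure M] (b : M) : Prop := ∀ n : ℕ, numM M n < b

/-- The atomic formula `t < u`. -/
def ltFm {α : Type} {n : ℕ} (t u : lang.Term (α ⊕ Fin n)) : lang.BoundedFormula α n :=
  BoundedFormula.rel (Rel.lt : lang.Relations 2) ![t, u]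

/-- Δ₀ formulas: built from atomic formulas by boolean connectives and
bounded universal quantification (this generates, up to logical equivalence,
the usual class of bounded formulas). -/
inductive IsDelta0 {α : Type} : ∀ n : ℕ, lang.BoundedFormula α n → Prop
  | falsum (n : ℕ) : IsDelta0 n BoundedFormula.falsum
  | equal (n : ℕ) (t u : lang.Term (α ⊕ Fin n)) : IsDelta0 n (BoundedFormula.equal t u)
  | rel (n l : ℕ) (R : lang.Relations l) (ts : Fin l → lang.Term (α ⊕ Fin n)) :
      IsDelta0 n (BoundedFormula.rel R ts)
  | imp (n : ℕ) {φ ψ : lang.BoundedFormula α n} :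
      IsDelta0 n φ → IsDelta0 n ψ → IsDelta0 n (φ.imp ψ)
  | bdAll (n : ℕ) (t : lang.Term (α ⊕ Fin n)) {φ : lang.BoundedFormula α (n + 1)} :
      IsDelta0 (n + 1) φ →
      IsDelta0 n
        (BoundedFormula.all ((ltFm (Term.var (Sum.inr (Fin.last n))) (t.liftAt 1 n)).imp φ))

mutual
  /-- Σ_m formulas. -/
  inductive SigmaFm {α : Type} : ℕ → ∀ n : ℕ, lang.BoundedFormula α n → Prop
    | delta0 (m n : ℕ) {φ : lang.BoundedFormula α n} : IsDelta0 n φ → SigmaFm m n φ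
    | ofPi (m n : ℕ) {φ : lang.BoundedFormula α n} : PiFm m n φ → SigmaFm (m + 1) n φ
    | ex (m n : ℕ) {φ : lang.BoundedFormula α (n + 1)} :
        SigmaFm (m + 1) (n + 1) φ → SigmaFm (m + 1) n φ.ex
  /-- Π_m formulas. -/
  inductive PiFm {α : Type} : ℕ → ∀ n : ℕ, lang.BoundedFormula α n → Prop
    | delta0 (m n : ℕ) {φ : lang.BoundedFormula α n} : IsDelta0 n φ → PiFm m n φ
    | ofSigma (m n : ℕ) {φ : lang.BoundedFormula α n} : SigmaFm m n φ → PiFm (m + 1) n φ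
    | all (m n : ℕ) {φ : lang.BoundedFormula α (n + 1)} :
        PiFm (m + 1) (n + 1) φ → PiFm (m + 1) n φ.all
end

/-- A `k`-ary relation on `M` is Σ_m-definable (with parameters from `M`). -/
def IsSigmaDef (m : ℕ) (M : Type) [lang.Structure M] {k : ℕ} (R : (Fin k → M) → Prop) : Prop :=
  ∃ (p : ℕ) (φ : lang.BoundedFormula (Fin k ⊕ Fin p) 0) (w : Fin p → M),
    SigmaFm m 0 φ ∧ ∀ v : Fin k → M, R v ↔ φ.Realize (Sum.elim v w) finZeroElim

/-- A subset of `M` is Σ_m-definable with parameters. -/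
def SigmaDef1 (m : ℕ) (M : Type) [lang.Structure M] (A : Set M) : Prop :=
  IsSigmaDef m M (k := 1) fun v => v 0 ∈ A

/-- A binary relation on `M` is Σ_m-definable with parameters. -/
def SigmaDef2 (m : ℕ) (M : Type) [lang.Structure M] (R : M → M → Prop) : Prop :=
  IsSigmaDef m M (k := 2) fun v => R (v 0) (v 1)

/-- A ternary relation on `M` is Σ_m-definable with parameters. -/
def SigmaDef3 (m : ℕ) (M : Type) [lang.Structure M] (R : M → M → M → Prop) : Prop :=
  IsSigmaDef m M (k := 3) fun v => R (v 0) (v 1) (v 2)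

/-- `M` is a model of PA⁻ (the nonnegative part of a discretely ordered
commutative semiring). -/
structure PAm (M : Type) [lang.Structure M] : Prop where
  add_assoc : ∀ x y z : M, x + y + z = x + (y + z)
  add_comm : ∀ x y : M, x + y = y + x
  mul_assoc : ∀ x y z : M, x * y * z = x * (y * z)
  mul_comm : ∀ x y : M, x * y = y * x
  ldistrib : ∀ x y z : M, x * (y + z) = x * y + x * z
  add_zero : ∀ x : M, x + 0 = x
  mul_zero : ∀ x : M, x * 0 = 0
  mul_one : ∀ x : M, x * 1 = x
  lt_trans : ∀ x y z : M, x < y → y < z → x < z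
  lt_irrefl : ∀ x : M, ¬x < x
  lt_total : ∀ x y : M, x < y ∨ x = y ∨ y < x
  add_lt_add : ∀ x y z : M, x < y → x + z < y + z
  mul_lt_mul : ∀ x y z : M, x < y → 0 < z → x * z < y * z
  sub_exists : ∀ x y : M, x < y → ∃ z, x + z = y
  zero_lt_one : (0 : M) < 1
  discrete : ∀ x : M, 0 < x → (1 : M) ≤ x
  zero_le : ∀ x : M, (0 : M) ≤ x

/-- `M` satisfies the Σ_m-induction scheme (with parameters). -/
def ISig (m : ℕ) (M : Type) [lang.Structure M] : Prop :=
  ∀ A : Set M, SigmaDef1 m M A → (0 : M) ∈ A → (∀ x, x ∈ A → x + 1 ∈ A) → ∀ x, x ∈ A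

/-- `M` satisfies the Σ_m-collection (bounding) scheme (with parameters). -/
def BSig (m : ℕ) (M : Type) [lang.Structure M] : Prop :=
  ∀ R : M → M → Prop, SigmaDef2 m M R → ∀ a : M,
    (∀ x, x < a → ∃ y, R x y) → ∃ b, ∀ x, x < a → ∃ y, y < b ∧ R x y

section Coding

variable {M : Type} [lang.Structure M]

/-- `z` is the Cantor pair `⟨x, y⟩`: `2z = (x+y)(x+y+1) + 2y`. -/
def IsPairC (z x y : M) : Prop := z + z = (x + y) * (x + y + 1) + (y + y)

/-- Gödel's β-function: `x = a mod ((i+1)·b + 1)`. -/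
def BetaC (a b i x : M) : Prop :=
  x < (i + 1) * b + 1 ∧ ∃ q, a = q * ((i + 1) * b + 1) + x

/-- The sequence coded by `s` (via a Cantor pair of β-function data) has value `x`
at place `i`. -/
def SeqAt (s i x : M) : Prop := ∃ a b, IsPairC s a b ∧ BetaC a b i x

/-- `c` codes the M-finite set `X` of cardinality `card`: `c = ⟨card, s⟩` where `s`
codes the strictly increasing enumeration of `X` of length `card`. -/
def CodesFinset (c : M) (X : Set M) (card : M) : Prop :=
  ∃ s, IsPairC c card s ∧
    (∀ i, i < card → ∃ x, x ∈ X ∧ SeqAt s i x) ∧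
    (∀ i j x y, i < j → j < card → SeqAt s i x → SeqAt s j y → x < y) ∧
    (∀ x, x ∈ X ↔ ∃ i, i < card ∧ SeqAt s i x)

/-- `X` is an M-finite (coded) set. -/
def MFinite (X : Set M) : Prop := ∃ c card : M, CodesFinset c X card

/-- `d` codes an `e`-element subset `D` of `[0, y)`, i.e. an element of `[y]^e`. -/
def CodesTupleIn (d e y : M) (D : Set M) : Prop :=
  CodesFinset d D e ∧ ∀ z ∈ D, z < y

/-- `f` codes a (finite) function defined on all of `[0, a)`. -/
def CodesFunOn (f a : M) : Prop :=
  ∀ x, x < a → (∃ y, SeqAt f x y) ∧ ∀ y y', SeqAt f x y → SeqAt f x y' → y = y'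

/-- `X` is an M-coded subset of `[0, a)`. -/
def MCodedSubset (a : M) (X : Set M) : Prop :=
  MFinite X ∧ ∀ x ∈ X, x < a

end Coding

/-- An `M`-ultrafilter on `a`: an ultrafilter of the Boolean algebra of
M-finite subsets of `[0, a)`. -/
structure MUltra (M : Type) [lang.Structure M] (a : M) where
  sets : Set (Set M)
  mem_coded : ∀ X ∈ sets, MCodedSubset a X
  univ_mem : {x : M | x < a} ∈ sets
  superset_mem : ∀ X Y : Set M, X ∈ sets → MCodedSubset a Y → X ⊆ Y → Y ∈ sets
  inter_mem : ∀ X Y : Set M, X ∈ sets → Y ∈ sets → X ∩ Y ∈ sets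
  empty_not_mem : (∅ : Set M) ∉ sets
  ultra : ∀ X : Set M, MCodedSubset a X → X ∈ sets ∨ {x : M | x < a ∧ x ∉ X} ∈ sets

section Principles

variable (M : Type) [lang.Structure M]

/-- `F` is (the graph of) a Σ_m-definable injection from `[0, y)` into `[0, x)`. -/
def SigmaInjRel (m : ℕ) (F : M → M → Prop) (y x : M) : Prop :=
  SigmaDef2 m M F ∧
    (∀ u, u < y → ∃ v, v < x ∧ F u v) ∧
    (∀ u v v', u < y → F u v → F u v' → v = v') ∧
    (∀ u u' v, u < y → u' < y → F u v → F u' v → u = u')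

/-- There exists a Σ_m-definable injection from `[0, y)` into `[0, x)`. -/
def ExSigmaInj (m : ℕ) (y x : M) : Prop := ∃ F : M → M → Prop, SigmaInjRel M m F y x

/-- There exists a Σ_m-definable injection from all of `M` into `[0, a)`. -/
def SigmaInjWhole (m : ℕ) (a : M) : Prop :=
  ∃ F : M → M → Prop, SigmaDef2 m M F ∧
    (∀ u, ∃ v, v < a ∧ F u v) ∧
    (∀ u v v', F u v → F u v' → v = v') ∧
    (∀ u u' v, F u v → F u' v → u = u')

/-- CARD(Σ_m): no Σ_m-definable multivalued map sends `M` injectively below `a`. -/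
def CARD (m : ℕ) : Prop :=
  ∀ F : M → M → Prop, SigmaDef2 m M F → ∀ a : M,
    (∀ x, ∃ y, y < a ∧ F x y) →
      ∃ x0 x1 y, x0 ≠ x1 ∧ y < a ∧ F x0 y ∧ F x1 y

/-- GPHP(Σ_m): for every `x` there is `y` with no Σ_m-definable injection of
`[0,y)` into `[0,x)`. -/
def GPHP (m : ℕ) : Prop := ∀ x : M, ∃ y : M, ¬ExSigmaInj M m y x

/-- WPHP(Σ_m): for `x > 0` there is no Σ_m-definable injection of `[0,2x)` into `[0,x)`. -/
def WPHP (m : ℕ) : Prop := ∀ x : M, 0 < x → ¬ExSigmaInj M m (x + x) x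

/-- `C` is a Σ_m-definable `k`-coloring of `[y]^e` (acting on codes of
`e`-element subsets of `[0,y)`, independently of the chosen code). -/
def IsColoring (m : ℕ) (e y k : M) (C : M → M → Prop) : Prop :=
  SigmaDef2 m M C ∧
    (∀ d D, CodesTupleIn d e y D → ∃ i, i < k ∧ C d i) ∧
    (∀ d d' D i i', CodesTupleIn d e y D → CodesTupleIn d' e y D → C d i → C d' i' → i = i')

/-- FRT^e_k(Σ_m): every Σ_m-definable `k`-coloring of some `[y]^e` has an
M-finite homogeneous set of cardinality `x`, for every `x`. -/
def FRT (m : ℕ) (e k : M) : Prop :=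
  ∀ x : M, ∃ y : M, ∀ C : M → M → Prop, IsColoring M m e y k C →
    ∃ (c : M) (H : Set M), CodesFinset c H x ∧ (∀ z ∈ H, z < y) ∧
      ∃ i, ∀ d D, CodesFinset d D e → D ⊆ H → C d i

/-- fairFRT^e_k(Σ_m): the homogeneous set is required to be given as the range of a
Σ_m-definable injection from `[0,x)` into `[0,y)`. -/
def FairFRT (m : ℕ) (e k : M) : Prop :=
  ∀ x : M, ∃ y : M, ∀ C : M → M → Prop, IsColoring M m e y k C →
    ∃ H : M → M → Prop, SigmaInjRel M m H x y ∧
      ∃ i, ∀ d D, CodesFinset d D e → (∀ z ∈ D, ∃ u, u < x ∧ H u z) → C d i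

/-- `C` is a Σ_m-definable `k`-coloring of `[0, y)`. -/
def IsColoring1 (m : ℕ) (y k : M) (C : M → M → Prop) : Prop :=
  SigmaDef2 m M C ∧
    (∀ z, z < y → ∃ i, i < k ∧ C z i) ∧
    (∀ z i i', z < y → C z i → C z i' → i = i')

/-- FRT¹_k(Σ_m): every Σ_m-definable `k`-coloring of some `[0,y)` has an M-finite
homogeneous set of cardinality `x`, for every `x`. -/
def FRT1 (m : ℕ) (k : M) : Prop :=
  ∀ x : M, ∃ y : M, ∀ C : M → M → Prop, IsColoring1 M m y k C →
    ∃ (c : M) (H : Set M), CodesFinset c H x ∧ (∀ z ∈ H, z < y) ∧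
      ∃ i, ∀ z ∈ H, C z i

/-- fairFRT¹_k(Σ_m). -/
def FairFRT1 (m : ℕ) (k : M) : Prop :=
  ∀ x : M, ∃ y : M, ∀ C : M → M → Prop, IsColoring1 M m y k C →
    ∃ H : M → M → Prop, SigmaInjRel M m H x y ∧
      ∃ i, ∀ u v, u < x → H u v → C v i

end Principles

section Approx

variable {M : Type} [lang.Structure M]

/-- `f` is (the graph of) a partial function. -/
def IsPartialFun (f : M → M → Prop) : Prop := ∀ x y y', f x y → f x y' → y = y'

/-- `s` codes an approximation to the partial function `f` of length `b`. -/
def IsApprox (f : M → M → Prop) (s b : M) : Prop :=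
  (∀ i, i < b → ∃ v, SeqAt s i v) ∧
    (∀ i u v x y, i + 1 < b → SeqAt s i u → SeqAt s (i + 1) v → x ≤ u → f x y → y ≤ v)

/-- `s` codes a `g`-stretched approximation to the partial function `f` of length `b`. -/
def IsStretchedApprox (f g : M → M → Prop) (s b : M) : Prop :=
  (∀ i, i < b → ∃ v, SeqAt s i v) ∧
    (∀ i u w v x y, i + 1 < b → SeqAt s i u → g u w → SeqAt s (i + 1) v →
      x ≤ w → f x y → y ≤ v)

/-- The eventual (limit) value of `fun s => h s ·` is `x`. -/
def EvLim (h : M → M → Prop) (x : M) : Prop := ∃ s : M, ∀ t, s < t → h t x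

end Approx

/-- PΣ_m: every partial Σ_m-definable function admits approximations of every length. -/
def PSig (m : ℕ) (M : Type) [lang.Structure M] : Prop :=
  ∀ f : M → M → Prop, SigmaDef2 m M f → IsPartialFun f → ∀ b : M, ∃ s, IsApprox f s b

section Extensions

variable (M N : Type) [lang.Structure M] [lang.Structure N]

/-- `g : M → N` is Σ_m-elementary: Σ_m formulas with parameters from `M` transfer. -/
def SigmaElem (m : ℕ) (g : M → N) : Prop :=
  ∀ (p : ℕ) (φ : lang.BoundedFormula (Fin p) 0), SigmaFm m 0 φ →
    ∀ v : Fin p → M, (φ.Realize v finZeroElim ↔ φ.Realize (g ∘ v) finZeroElim)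

/-- The extension `g : M → N` is cofinal. -/
def Cofinal (g : M → N) : Prop := ∀ z : N, ∃ x : M, z ≤ g x

/-- `[0,a]^M = [0,a]^N`: every element of `N` below `g a` comes from `M`. -/
def SameBelow (g : M → N) (a : M) : Prop := ∀ z : N, z ≤ g a → ∃ x : M, g x = z

end Extensions

section Ramsey

variable {M : Type} [lang.Structure M]

/-- `f` is an M-coded `k`-coloring of `[y]^e` (assigning colors to codes of
`e`-subsets of `[0,y)`, independently of the code). -/
def CodedColoring (f e y k : M) : Prop :=
  (∀ d D, CodesTupleIn d e y D → ∃ i, i < k ∧ SeqAt f d i) ∧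
    (∀ d d' D i i', CodesTupleIn d e y D → CodesTupleIn d' e y D →
      SeqAt f d i → SeqAt f d' i' → i = i')

/-- The coded coloring `f` of `[y]^e` has an M-coded homogeneous set of cardinality `x`. -/
def CodedHomog (f e y x : M) : Prop :=
  ∃ (c : M) (H : Set M), CodesFinset c H x ∧ (∀ z ∈ H, z < y) ∧
    ∃ i, ∀ d D, CodesFinset d D e → D ⊆ H → SeqAt f d i

/-- `y = r(x, e, k)`: `y` is the least size guaranteeing coded homogeneous sets of
cardinality `x` for all coded `k`-colorings of `e`-subsets. -/
def IsRamsey (x e k y : M) : Prop :=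
  (∀ f, CodedColoring f e y k → CodedHomog f e y x) ∧
    (∀ y', y' < y → ∃ f, CodedColoring f e y' k ∧ ¬CodedHomog f e y' x)

/-- `y = r^(b)(x, e, k)`: the `b`-th iterate of the Ramsey function inside `M`. -/
def IterRamsey (x e k b y : M) : Prop :=
  ∃ s : M, SeqAt s 0 x ∧ SeqAt s b y ∧ (∀ i, i ≤ b → ∃ u, SeqAt s i u) ∧
    (∀ i u v, i < b → SeqAt s i u → SeqAt s (i + 1) v → IsRamsey u e k v)

end Ramsey

end ArithFC

namespace ArithFC

/-!
In a model of IΣ₁ every element codes a total sequence through the β-function, and by Chinese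
remaindering every Δ₀ relation that is total has a coded choice function on `[0, n)`. Hence the
classes modulo `U` of coded functions are closed under the operations, differences of such functions
are again coded, and `U` decides Δ₀ properties; this makes the ultrapower a model of PA⁻ in which
`M` sits, cofinally, as the constant functions. Let `c` be the class of the identity. That
`z` is the entry of `f` at `c` unfolds to polynomial equations and inequalities with coded
witnesses, so it holds for `z = [f]`, and uniqueness of entries, which needs only PA⁻, leaves no
other `z`: thus `f(c) = [f]`.
-/

section OrderedSemiring

variable {M : Type} [lang.Structure M] [hM : Fact (PAm M)]

instance : CommSemiring M where
  add_assoc := hM.out.add_assoc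
  zero_add x := by rw [hM.out.add_comm, hM.out.add_zero]
  add_zero := hM.out.add_zero
  add_comm := hM.out.add_comm
  left_distrib := hM.out.ldistrib
  right_distrib x y z := by
    rw [hM.out.mul_comm, hM.out.ldistrib, hM.out.mul_comm z x, hM.out.mul_comm z y]
  zero_mul x := by rw [hM.out.mul_comm, hM.out.mul_zero]
  mul_zero := hM.out.mul_zero
  mul_assoc := hM.out.mul_assoc
  one_mul x := by rw [hM.out.mul_comm, hM.out.mul_one]
  mul_one := hM.out.mul_one
  mul_comm := hM.out.mul_comm
  nsmul := nsmulRec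

noncomputable instance : LinearOrder M where
  le_refl _ := Or.inr rfl
  le_trans := by
    rintro x y z (hxy | rfl) (hyz | rfl)
    exacts [Or.inl (hM.out.lt_trans _ _ _ hxy hyz), Or.inl hxy, Or.inl hyz, Or.inr rfl]
  le_antisymm := by
    rintro x y (hxy | rfl) (hyx | hyx)
    exacts [(hM.out.lt_irrefl _ (hM.out.lt_trans _ _ _ hxy hyx)).elim, hyx.symm, rfl, rfl]
  lt_iff_le_not_ge x y := by
    refine ⟨fun h => ⟨Or.inl h, ?_⟩, ?_⟩
    · rintro (h' | rfl)
      exacts [hM.out.lt_irrefl _ (hM.out.lt_trans _ _ _ h h'), hM.out.lt_irrefl _ h]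
    · rintro ⟨h | rfl, h'⟩
      exacts [h, (h' (Or.inr rfl)).elim]
  le_total x y := (hM.out.lt_total x y).elim (fun h => Or.inl (Or.inl h))
    fun h => h.elim (fun h => Or.inl (Or.inr h)) fun h => Or.inr (Or.inl h)
  toDecidableLE := Classical.decRel _

instance : IsOrderedCancelAddMonoid M :=
  .of_add_lt_add_left fun x y z h => by
    simpa only [add_comm x] using hM.out.add_lt_add y z x h

instance : IsStrictOrderedRing M where
  exists_pair_ne := ⟨0, 1, fun h => hM.out.lt_irrefl 0 (by simpa [← h] using hM.out.zero_lt_one)⟩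
  mul_lt_mul_of_pos_left x hx y z h := by
    simpa only [mul_comm x] using hM.out.mul_lt_mul y z x h hx
  mul_lt_mul_of_pos_right x hx y z h := hM.out.mul_lt_mul y z x h hx
  zero_le_one := Or.inl hM.out.zero_lt_one

instance : CanonicallyOrderedAdd M where
  exists_add_of_le := by
    rintro x y (h | rfl)
    · obtain ⟨z, hz⟩ := hM.out.sub_exists x y h
      exact ⟨z, hz.symm⟩
    · exact ⟨0, (add_zero x).symm⟩
  le_add_self x y := by simpa using add_le_add_left (hM.out.zero_le y) x
  le_self_add x y := by simpa using add_le_add_right (hM.out.zero_le y) x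

noncomputable instance : SuccOrder M :=
  .ofSuccLeIff (· + 1) fun {x y} => by
    refine ⟨fun h => (lt_add_one x).trans_le h, fun h => ?_⟩
    obtain ⟨z, rfl⟩ := exists_add_of_le h.le
    exact add_le_add_right (hM.out.discrete z (pos_of_lt_add_right h)) x

noncomputable instance : SuccAddOrder M where
  succ_eq_add_one _ := rfl

end OrderedSemiring

section Formulas

variable {α β : Type} {n m : ℕ}

/-- The extension of the renaming `σ` of the variables of a formula to the scope of a quantifier,
where it fixes the newly bound variable. -/
def liftRenaming (σ : α ⊕ Fin n → β ⊕ Fin m) : α ⊕ Fin (n + 1) → β ⊕ Fin (m + 1) :=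
  Sum.elim (Sum.map id Fin.castSucc ∘ σ ∘ Sum.inl)
    (Fin.snoc (Sum.map id Fin.castSucc ∘ σ ∘ Sum.inr) (Sum.inr (Fin.last m)))

theorem elim_snoc_comp_liftRenaming {M : Type} (σ : α ⊕ Fin n → β ⊕ Fin m)
    (f : β → M) (v : Fin m → M) (x : M) (g : α → M) (w : Fin n → M)
    (h : Sum.elim f v ∘ σ = Sum.elim g w) :
    Sum.elim f (Fin.snoc v x : Fin (m + 1) → M) ∘ liftRenaming σ = Sum.elim g (Fin.snoc w x) := by
  have elim_snoc (z : β ⊕ Fin m) :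
      Sum.elim f (Fin.snoc v x : Fin (m + 1) → M) (Sum.map id Fin.castSucc z) = Sum.elim f v z := by
    cases z <;> simp
  ext (i | i)
  · simpa [liftRenaming, elim_snoc] using congrFun h (Sum.inl i)
  · induction i using Fin.lastCases with
    | last => simp [liftRenaming]
    | cast i => simpa [liftRenaming, elim_snoc] using congrFun h (Sum.inr i)

variable {M : Type} [lang.Structure M]

theorem realize_ltFm (t u : lang.Term (α ⊕ Fin n)) (f : α → M) (v : Fin n → M) :
    (ltFm t u).Realize f v ↔ t.realize (Sum.elim f v) < u.realize (Sum.elim f v) :=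
  BoundedFormula.realize_rel₂

theorem realize_bdAll (t : lang.Term (α ⊕ Fin n)) (φ : lang.BoundedFormula α (n + 1))
    (f : α → M) (v : Fin n → M) :
    (((ltFm (Term.var (Sum.inr (Fin.last n))) (t.liftAt 1 n)).imp φ).all).Realize f v ↔
      ∀ x, x < t.realize (Sum.elim f v) → φ.Realize f (Fin.snoc v x) := by
  have lift_snoc (x : M) : (t.liftAt 1 n).realize (Sum.elim f (Fin.snoc v x : Fin (n + 1) → M)) =
      t.realize (Sum.elim f v) := by
    rw [Term.realize_liftAt]
    congr 1
    ext (i | i)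
    · rfl
    · simp [Fin.snoc]
  simp only [BoundedFormula.realize_all, BoundedFormula.realize_imp, realize_ltFm, lift_snoc,
    Term.realize_var, Sum.elim_inr, Fin.snoc_last]

theorem IsDelta0.exists_rename {φ : lang.BoundedFormula α n} (hφ : IsDelta0 n φ)
    (σ : α ⊕ Fin n → β ⊕ Fin m) : ∃ ψ : lang.BoundedFormula β m, IsDelta0 m ψ ∧
      ∀ (f : β → M) (v : Fin m → M) (g : α → M) (w : Fin n → M),
        Sum.elim f v ∘ σ = Sum.elim g w → (ψ.Realize f v ↔ φ.Realize g w) := by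
  induction hφ generalizing m with
  | falsum n => exact ⟨_, .falsum m, fun _ _ _ _ _ => Iff.rfl⟩
  | equal n t u =>
    refine ⟨_, .equal m (t.relabel σ) (u.relabel σ), fun f v g w h => ?_⟩
    simp only [BoundedFormula.Realize, Term.realize_relabel, h]
  | rel n l R ts =>
    refine ⟨_, .rel m l R fun i => (ts i).relabel σ, fun f v g w h => ?_⟩
    simp only [BoundedFormula.Realize, Term.realize_relabel, h]
  | imp n _ _ ih₁ ih₂ =>
    obtain ⟨ψ₁, hψ₁, realize₁⟩ := ih₁ σ
    obtain ⟨ψ₂, hψ₂, realize₂⟩ := ih₂ σ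
    refine ⟨_, .imp m hψ₁ hψ₂, fun f v g w h => ?_⟩
    simp only [BoundedFormula.realize_imp, realize₁ f v g w h, realize₂ f v g w h]
  | bdAll n t _ ih =>
    obtain ⟨ψ, hψ, realize⟩ := ih (liftRenaming σ)
    refine ⟨_, .bdAll m (t.relabel σ) hψ, fun f v g w h => ?_⟩
    simp only [realize_bdAll, Term.realize_relabel, h]
    exact forall₂_congr fun x _ =>
      realize _ _ _ _ (elim_snoc_comp_liftRenaming σ f v x g w h)

theorem realize_congr_of_eqOn_freeVarFinset [DecidableEq α] (φ : lang.BoundedFormula α n)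
    {f g : α → M} (h : Set.EqOn f g φ.freeVarFinset) (v : Fin n → M) :
    φ.Realize f v ↔ φ.Realize g v := by
  rw [← BoundedFormula.realize_restrictFreeVar' Set.Subset.rfl,
    ← BoundedFormula.realize_restrictFreeVar' (v := g) Set.Subset.rfl]
  exact iff_of_eq (congrArg (BoundedFormula.Realize _ · v) (funext fun i => h i.2))

theorem exists_finite_parameters (φ : lang.BoundedFormula M n) :
    ∃ (p : ℕ) (w : Fin p → M) (ρ : M → Fin p),
      ∀ v, φ.Realize (w ∘ ρ) v ↔ φ.Realize id v := by
  classical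
  let s := insert 0 φ.freeVarFinset
  let w : Fin s.card → M := Subtype.val ∘ s.equivFin.symm
  have : Nonempty (Fin s.card) := ⟨s.equivFin ⟨0, Finset.mem_insert_self _ _⟩⟩
  refine ⟨s.card, w, Function.invFun w, realize_congr_of_eqOn_freeVarFinset φ fun x hx => ?_⟩
  exact Function.invFun_eq (f := w)
    ⟨s.equivFin ⟨x, Finset.mem_insert_of_mem hx⟩, by simp [w]⟩

end Formulas

section Definability

variable {M : Type} [lang.Structure M] {n m : ℕ} {α : Type}

/-- `R` is Δ₀-definable with parameters from `M`. The variables of a defining formula are its bound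
ones; its free variables, indexed by `M`, are the parameters. This is a class, so that instance
search checks definability by following the syntax of `R`. -/
class IsDelta0Def (R : (Fin n → M) → Prop) : Prop where
  exists_formula : ∃ φ : lang.BoundedFormula M n, IsDelta0 n φ ∧ ∀ v, φ.Realize id v ↔ R v

/-- `F` has a Δ₀-definable graph and is bounded by a term, which makes substitution of `F` into
Δ₀ relations possible by bounded quantification. -/
class IsDelta0Fun (F : (Fin n → M) → M) : Prop where
  exists_bound : ∃ t : lang.Term (M ⊕ Fin n), ∀ v, F v ≤ t.realize (Sum.elim id v)
  graph : IsDelta0Def fun p : Fin (n + 1) → M => p (Fin.last n) = F fun i => p i.castSucc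

theorem IsDelta0Def.congr {R S : (Fin n → M) → Prop} (hR : IsDelta0Def R) (h : ∀ v, R v ↔ S v) :
    IsDelta0Def S :=
  (funext fun v => propext (h v) : R = S) ▸ hR

theorem isDelta0Def_realize_eq (t u : lang.Term (M ⊕ Fin n)) :
    IsDelta0Def fun v => t.realize (Sum.elim id v) = u.realize (Sum.elim id v) :=
  ⟨_, .equal n t u, fun _ => Iff.rfl⟩

theorem isDelta0Def_realize_lt (t u : lang.Term (M ⊕ Fin n)) :
    IsDelta0Def fun v => t.realize (Sum.elim id v) < u.realize (Sum.elim id v) :=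
  ⟨_, .rel n 2 Rel.lt ![t, u], realize_ltFm t u id⟩

theorem isDelta0Def_ball_realize (t : lang.Term (M ⊕ Fin n)) (R : (Fin n → M) → M → Prop)
    (hR : IsDelta0Def fun p : Fin (n + 1) → M => R (fun i => p i.castSucc) (p (Fin.last n))) :
    IsDelta0Def fun v => ∀ x, x < t.realize (Sum.elim id v) → R v x := by
  obtain ⟨φ, hφ, realize⟩ := hR.exists_formula
  refine ⟨_, .bdAll n t hφ, fun v => ?_⟩
  simp only [realize_bdAll, realize, Fin.snoc_castSucc, Fin.snoc_last]

section Connectives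

variable {R S : (Fin n → M) → Prop}

instance IsDelta0Def.imp [hR : IsDelta0Def R] [hS : IsDelta0Def S] :
    IsDelta0Def fun v => R v → S v := by
  obtain ⟨φ, hφ, realize_φ⟩ := hR.exists_formula
  obtain ⟨ψ, hψ, realize_ψ⟩ := hS.exists_formula
  exact ⟨_, .imp n hφ hψ, fun v => by rw [BoundedFormula.realize_imp, realize_φ, realize_ψ]⟩

instance IsDelta0Def.not [IsDelta0Def R] : IsDelta0Def fun v => ¬ R v :=
  have : IsDelta0Def fun _ : Fin n → M => False := ⟨_, .falsum n, fun _ => Iff.rfl⟩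
  IsDelta0Def.imp

instance IsDelta0Def.or [IsDelta0Def R] [IsDelta0Def S] : IsDelta0Def fun v => R v ∨ S v :=
  (inferInstance : IsDelta0Def fun v => ¬ R v → S v).congr fun _ => or_iff_not_imp_left.symm

instance IsDelta0Def.and [IsDelta0Def R] [IsDelta0Def S] : IsDelta0Def fun v => R v ∧ S v :=
  (inferInstance : IsDelta0Def fun v => ¬ (R v → ¬ S v)).congr fun _ => Classical.not_imp.trans
    (and_congr_right fun _ => not_not)

end Connectives

instance (priority := low) IsDelta0Def.rename {R : (Fin n → M) → Prop} [hR : IsDelta0Def R]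
    (σ : Fin n → Fin m) : IsDelta0Def fun v => R fun i => v (σ i) := by
  obtain ⟨φ, hφ, realize⟩ := hR.exists_formula
  obtain ⟨ψ, hψ, realize_ψ⟩ := hφ.exists_rename (M := M) (β := M) (Sum.map id σ)
  exact ⟨ψ, hψ, fun v => (realize_ψ id v id _ (Sum.elim_comp_map ..)).trans (realize _)⟩

theorem isDelta0Fun_realize [Fact (PAm M)] (t : lang.Term (M ⊕ Fin n)) :
    IsDelta0Fun fun v => t.realize (Sum.elim id v) where
  exists_bound := ⟨t, fun _ => le_rfl⟩
  graph := by
    refine (isDelta0Def_realize_eq (Term.var (Sum.inr (Fin.last n)))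
      (t.relabel (Sum.map id Fin.castSucc))).congr fun p => ?_
    simp only [Term.realize_var, Sum.elim_inr, Term.realize_relabel, Sum.elim_comp_map]
    rfl

instance IsDelta0Fun.var [Fact (PAm M)] (i : Fin n) : IsDelta0Fun fun v : Fin n → M => v i :=
  isDelta0Fun_realize (Term.var (Sum.inr i))

instance IsDelta0Fun.const [Fact (PAm M)] (x : M) : IsDelta0Fun fun _ : Fin n → M => x :=
  isDelta0Fun_realize (Term.var (Sum.inl x))

instance (priority := low) IsDelta0Fun.rename {F : (Fin n → M) → M} [hF : IsDelta0Fun F]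
    (σ : Fin n → Fin m) : IsDelta0Fun fun v => F fun i => v (σ i) where
  exists_bound := by
    obtain ⟨t, ht⟩ := hF.exists_bound
    refine ⟨t.relabel (Sum.map id σ), fun v => ?_⟩
    rw [Term.realize_relabel, Sum.elim_comp_map]
    exact ht _
  graph := by
    refine (IsDelta0Def.rename (hR := hF.graph)
      (Fin.snoc (Fin.castSucc ∘ σ) (Fin.last m))).congr fun p => ?_
    simp only [Fin.snoc_last, Fin.snoc_castSucc, Function.comp_apply]

section Substitution

theorem realize_add_one (t : lang.Term α) (f : α → M) :
    (Functions.apply₂ (L := lang) Func.add t (Constants.term (L := lang) Func.one)).realize f =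
      t.realize f + 1 :=
  Term.realize_functions_apply₂.trans <| congrArg (t.realize f + ·) <|
    Term.realize_constants.trans rfl

variable [Fact (PAm M)]

theorem IsDelta0Def.subst {R : (Fin n → M) → M → Prop} (F : (Fin n → M) → M) [hF : IsDelta0Fun F]
    (hR : IsDelta0Def fun p : Fin (n + 1) → M => R (fun i => p i.castSucc) (p (Fin.last n))) :
    IsDelta0Def fun v => R v (F v) := by
  obtain ⟨t, ht⟩ := hF.exists_bound
  have := hF.graph
  refine (isDelta0Def_ball_realize (Functions.apply₂ (L := lang) Func.add t
    (Constants.term (L := lang) Func.one)) (fun v x => x = F v → R v x) .imp).congr fun v => ?_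
  simp only [realize_add_one, Order.lt_add_one_iff]
  exact ⟨fun h => h _ (ht v) rfl, fun h x _ hx => hx ▸ h⟩

instance IsDelta0Def.eq (F G : (Fin n → M) → M) [hF : IsDelta0Fun F] [IsDelta0Fun G] :
    IsDelta0Def fun v => F v = G v :=
  .congr (.subst (R := fun v x => x = F v) G hF.graph) fun _ => eq_comm

instance IsDelta0Def.lt (F G : (Fin n → M) → M) [IsDelta0Fun F] [IsDelta0Fun G] :
    IsDelta0Def fun v => F v < G v :=
  .subst (R := fun v x => F v < x) G <|
    .subst (R := fun p x => x < p (Fin.last n)) (fun p => F fun i => p i.castSucc)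
      (isDelta0Def_realize_lt (Term.var (Sum.inr (Fin.last _)))
        (Term.var (Sum.inr (Fin.last n).castSucc)))

instance IsDelta0Def.le (F G : (Fin n → M) → M) [IsDelta0Fun F] [IsDelta0Fun G] :
    IsDelta0Def fun v => F v ≤ G v :=
  (inferInstance : IsDelta0Def fun v => F v < G v ∨ F v = G v).congr fun _ => Iff.rfl

instance IsDelta0Def.ball (F : (Fin n → M) → M) (R : (Fin n → M) → M → Prop) [hF : IsDelta0Fun F]
    [IsDelta0Def fun p : Fin (n + 1) → M => R (fun i => p i.castSucc) (p (Fin.last n))] :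
    IsDelta0Def fun v => ∀ x, x < F v → R v x := by
  obtain ⟨t, ht⟩ := hF.exists_bound
  refine (isDelta0Def_ball_realize t (fun v x => x < F v → R v x) inferInstance).congr fun v => ?_
  exact ⟨fun h x hx => h x (hx.trans_le (ht v)) hx, fun h x _ hx => h x hx⟩

instance IsDelta0Def.bex (F : (Fin n → M) → M) (R : (Fin n → M) → M → Prop) [hF : IsDelta0Fun F]
    [IsDelta0Def fun p : Fin (n + 1) → M => R (fun i => p i.castSucc) (p (Fin.last n))] :
    IsDelta0Def fun v => ∃ x, x < F v ∧ R v x :=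
  (inferInstance : IsDelta0Def fun v => ¬ ∀ x, x < F v → ¬ R v x).congr fun v => by
    simp only [not_forall, not_not, exists_prop]

theorem IsDelta0Fun.funMap₂ (f : lang.Functions 2)
    (mono : ∀ ⦃x x' y y' : M⦄, x ≤ x' → y ≤ y' →
      Structure.funMap f ![x, y] ≤ Structure.funMap f ![x', y'])
    (F G : (Fin n → M) → M) [hF : IsDelta0Fun F] [hG : IsDelta0Fun G] :
    IsDelta0Fun fun v => Structure.funMap f ![F v, G v] where
  exists_bound := by
    obtain ⟨t, ht⟩ := hF.exists_bound
    obtain ⟨u, hu⟩ := hG.exists_bound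
    exact ⟨f.apply₂ t u, fun v => (mono (ht v) (hu v)).trans_eq
      Term.realize_functions_apply₂.symm⟩
  graph :=
    .subst (R := fun p x => p (Fin.last n) = Structure.funMap f ![x, G fun i => p i.castSucc])
      (fun p => F fun i => p i.castSucc) <|
    .subst (R := fun p y => p (Fin.last n).castSucc = Structure.funMap f ![p (Fin.last _), y])
      (fun p => G fun i => p i.castSucc.castSucc) <|
    (isDelta0Def_realize_eq (Term.var (Sum.inr (Fin.last n).castSucc.castSucc))
      (f.apply₂ (Term.var (Sum.inr (Fin.last (n + 1)).castSucc))
        (Term.var (Sum.inr (Fin.last _))))).congr fun _ => by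
          rw [Term.realize_functions_apply₂]; rfl

instance IsDelta0Fun.add (F G : (Fin n → M) → M) [IsDelta0Fun F] [IsDelta0Fun G] :
    IsDelta0Fun fun v => F v + G v :=
  .funMap₂ Func.add (fun _ _ _ _ => add_le_add) F G

instance IsDelta0Fun.mul (F G : (Fin n → M) → M) [IsDelta0Fun F] [IsDelta0Fun G] :
    IsDelta0Fun fun v => F v * G v :=
  .funMap₂ Func.mul (fun _ _ _ _ hx hy => mul_le_mul' hx hy) F G

instance IsDelta0Def.bex_le (F : (Fin n → M) → M) (R : (Fin n → M) → M → Prop) [IsDelta0Fun F]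
    [IsDelta0Def fun p : Fin (n + 1) → M => R (fun i => p i.castSucc) (p (Fin.last n))] :
    IsDelta0Def fun v => ∃ x, x ≤ F v ∧ R v x :=
  (inferInstance : IsDelta0Def fun v => ∃ x, x < F v + 1 ∧ R v x).congr fun v => by
    simp only [Order.lt_add_one_iff]

instance (priority := low) IsDelta0Def.comp₁ {R : M → Prop} (F : (Fin n → M) → M)
    [hR : IsDelta0Def fun v : Fin 1 → M => R (v 0)] [IsDelta0Fun F] :
    IsDelta0Def fun v => R (F v) :=
  .subst (R := fun _ => R) F (.rename (hR := hR) fun _ => Fin.last n)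

instance (priority := low) IsDelta0Def.comp₂ {R : M → M → Prop} (F G : (Fin n → M) → M)
    [hR : IsDelta0Def fun v : Fin 2 → M => R (v 0) (v 1)] [IsDelta0Fun F] [IsDelta0Fun G] :
    IsDelta0Def fun v => R (F v) (G v) :=
  .subst (R := fun v x => R x (G v)) F <|
    .subst (R := fun p y => R (p (Fin.last n)) y) (fun p => G fun i => p i.castSucc) <|
      IsDelta0Def.rename (hR := hR) ![(Fin.last n).castSucc, Fin.last (n + 1)]

instance (priority := low) IsDelta0Fun.comp_var {F : M → M} (i : Fin n)
    [hF : IsDelta0Fun fun v : Fin 1 → M => F (v 0)] : IsDelta0Fun fun v => F (v i) :=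
  IsDelta0Fun.rename (hF := hF) fun _ => i

end Substitution

section Induction

theorem sigmaDef1_exists {R : M → M → Prop} (hR : IsDelta0Def fun v : Fin 2 → M => R (v 0) (v 1)) :
    SigmaDef1 1 M {x | ∃ y, R x y} := by
  obtain ⟨φ, hφ, realize_φ⟩ := hR.exists_formula
  obtain ⟨p, w, ρ, realize_ρ⟩ := exists_finite_parameters φ
  obtain ⟨ψ, hψ, realize_ψ⟩ := hφ.exists_rename (M := M) (β := Fin 1 ⊕ Fin p) (m := 1)
    (Sum.elim (Sum.inl ∘ Sum.inr ∘ ρ) ![Sum.inl (Sum.inl 0), Sum.inr 0])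
  refine ⟨p, ψ.ex, w, .ex 0 0 (.delta0 1 1 hψ), fun v => ?_⟩
  refine (exists_congr fun y => ?_).trans BoundedFormula.realize_ex.symm
  rw [realize_ψ _ _ (w ∘ ρ) ![v 0, y], realize_ρ, realize_φ]
  · rfl
  · ext (x | i)
    · rfl
    · fin_cases i <;> rfl

variable [hI : Fact (ISig 1 M)]

theorem sigma1_induction {R : M → M → Prop} [hR : IsDelta0Def fun v : Fin 2 → M => R (v 0) (v 1)]
    (zero : ∃ y, R 0 y) (succ : ∀ x, (∃ y, R x y) → ∃ y, R (x + 1) y) (x : M) : ∃ y, R x y :=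
  hI.out _ (sigmaDef1_exists hR) zero succ x

theorem delta0_induction [Fact (PAm M)] {A : M → Prop}
    [IsDelta0Def fun v : Fin 1 → M => A (v 0)] (zero : A 0) (succ : ∀ x, A x → A (x + 1))
    (x : M) : A x :=
  (sigma1_induction (R := fun x _ => A x) ⟨0, zero⟩ (fun x ⟨y, h⟩ => ⟨y, succ x h⟩) x).elim
    fun _ h => h

end Induction

end Definability

section Coding

variable {M : Type} [lang.Structure M] [Fact (PAm M)]

theorem triangle_add_lt_triangle {s s' y : M} (hs : s < s') (hy : y ≤ s) :
    s * (s + 1) + (y + y) < s' * (s' + 1) := by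
  have hs' : s + 1 ≤ s' := Order.add_one_le_of_lt hs
  calc s * (s + 1) + (y + y)
    _ ≤ s * (s + 1) + (s + s) := by gcongr
    _ < s * (s + 1) + (s + s) + 1 + 1 := (lt_add_one _).trans (lt_add_one _)
    _ = (s + 1) * (s + 1 + 1) := by ring
    _ ≤ s' * (s' + 1) := by gcongr

theorem IsPairC.inj {z x y x' y' : M} (h : IsPairC z x y) (h' : IsPairC z x' y') :
    x = x' ∧ y = y' := by
  have not_sum_lt {x y x' y' : M} (h : IsPairC z x y) (h' : IsPairC z x' y') :
      ¬ x + y < x' + y' := fun hlt => by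
    have := triangle_add_lt_triangle hlt le_add_self
    rw [← h, h'] at this
    exact this.not_ge le_self_add
  have sum_eq : x + y = x' + y' :=
    le_antisymm (not_lt.1 (not_sum_lt h' h)) (not_lt.1 (not_sum_lt h h'))
  have snd_eq : y + y = y' + y' := add_left_cancel (h.symm.trans (h'.trans (by rw [sum_eq])))
  grind

theorem IsPairC.fst_le {z x y : M} (h : IsPairC z x y) : x ≤ z := by
  have : x + x ≤ z + z := by
    calc x + x ≤ x * x + x := by
          obtain rfl | hx := eq_zero_or_pos x
          · simp
          · gcongr; exact le_mul_of_one_le_right' (Order.one_le_iff_pos.2 hx)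
      _ ≤ x * x + x + (x * y + y * x + y * y + y + (y + y)) := le_self_add
      _ = z + z := by rw [h]; ring
  grind

theorem IsPairC.snd_le {z x y : M} (h : IsPairC z x y) : y ≤ z := by
  have : y + y ≤ z + z := le_add_self.trans_eq h.symm
  grind

theorem mul_add_lt_mul_add {m q q' x : M} (hx : x < m) (hq : q < q') (x' : M) :
    q * m + x < q' * m + x' :=
  calc q * m + x < q * m + m := by gcongr
    _ = (q + 1) * m := by ring
    _ ≤ q' * m := by gcongr; exact Order.add_one_le_of_lt hq
    _ ≤ q' * m + x' := le_self_add

theorem mul_add_inj {m q q' x x' : M} (hx : x < m) (hx' : x' < m)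
    (h : q * m + x = q' * m + x') : q = q' ∧ x = x' := by
  obtain hq | rfl | hq := lt_trichotomy q q'
  · exact absurd h (mul_add_lt_mul_add hx hq x').ne
  · exact ⟨rfl, add_left_cancel h⟩
  · exact absurd h (mul_add_lt_mul_add hx' hq x).ne'

theorem SeqAt.unique {s i x y : M} (h : SeqAt s i x) (h' : SeqAt s i y) : x = y := by
  obtain ⟨a, b, hp, hx, q, hq⟩ := h
  obtain ⟨a', b', hp', hy, q', hq'⟩ := h'
  obtain ⟨rfl, rfl⟩ := hp.inj hp'
  exact (mul_add_inj hx hy (hq.symm.trans hq')).2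

theorem SeqAt.le {s i x : M} (h : SeqAt s i x) : x ≤ s := by
  obtain ⟨a, b, hp, _, q, rfl⟩ := h
  exact le_add_self.trans hp.fst_le

theorem betaC_iff_bounded {a b i x : M} :
    BetaC a b i x ↔ x < (i + 1) * b + 1 ∧ ∃ q, q ≤ a ∧ a = q * ((i + 1) * b + 1) + x := by
  refine and_congr_right fun _ => exists_congr fun q => (and_iff_right_of_imp ?_).symm
  rintro rfl
  exact (le_mul_of_one_le_right' le_add_self).trans le_self_add

theorem seqAt_iff_bounded {s i x : M} :
    SeqAt s i x ↔ ∃ a, a ≤ s ∧ ∃ b, b ≤ s ∧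
      s + s = (a + b) * (a + b + 1) + (b + b) ∧ BetaC a b i x :=
  ⟨fun ⟨a, b, hp, h⟩ => ⟨a, hp.fst_le, b, hp.snd_le, hp, h⟩,
    fun ⟨a, _, b, _, hp, h⟩ => ⟨a, b, hp, h⟩⟩

section Definability

variable {n : ℕ} (F G H : (Fin n → M) → M) [IsDelta0Fun F] [IsDelta0Fun G] [IsDelta0Fun H]

instance IsDelta0Def.dvd : IsDelta0Def fun v => F v ∣ G v :=
  (inferInstance : IsDelta0Def fun v => ∃ q, q ≤ G v ∧ G v = F v * q).congr fun v => by
    refine ⟨fun ⟨q, _, hq⟩ => ⟨q, hq⟩, fun ⟨q, hq⟩ => ?_⟩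
    obtain h | h := eq_zero_or_pos (F v)
    · exact ⟨0, zero_le, by simp [hq, h]⟩
    · exact ⟨q, hq ▸ le_mul_of_one_le_left' (Order.one_le_iff_pos.2 h), hq⟩

instance IsDelta0Def.betaC {K : (Fin n → M) → M} [IsDelta0Fun K] :
    IsDelta0Def fun v => BetaC (F v) (G v) (H v) (K v) := by
  simp only [betaC_iff_bounded]
  infer_instance

instance IsDelta0Def.seqAt : IsDelta0Def fun v => SeqAt (F v) (G v) (H v) := by
  simp only [seqAt_iff_bounded]
  infer_instance

end Definability

variable [Fact (ISig 1 M)]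

theorem exists_isPairC (x y : M) : ∃ z, IsPairC z x y := by
  have exists_half (s : M) : ∃ t, t + t = s * (s + 1) := by
    refine sigma1_induction (R := fun s t => t + t = s * (s + 1)) ⟨0, by simp⟩ ?_ s
    rintro s ⟨t, ht⟩
    exact ⟨t + (s + 1), by linear_combination ht⟩
  obtain ⟨t, ht⟩ := exists_half (x + y)
  exact ⟨t + y, by rw [IsPairC, ← ht]; ring⟩

theorem exists_unpair (z : M) : ∃ x y, IsPairC z x y := by
  have bounded {z x y : M} (h : IsPairC z x y) :
      ∃ x, x ≤ z ∧ ∃ y, y ≤ z ∧ z + z = (x + y) * (x + y + 1) + (y + y) :=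
    ⟨x, h.fst_le, y, h.snd_le, h⟩
  suffices ∃ x, x ≤ z ∧ ∃ y, y ≤ z ∧ z + z = (x + y) * (x + y + 1) + (y + y) from
    let ⟨x, _, y, _, h⟩ := this; ⟨x, y, h⟩
  refine delta0_induction (A := fun z => ∃ x, x ≤ z ∧ ∃ y, y ≤ z ∧
    z + z = (x + y) * (x + y + 1) + (y + y)) ?_ ?_ z
  · exact bounded (x := 0) (y := 0) (by simp [IsPairC])
  · rintro z ⟨x, -, y, -, h⟩
    obtain rfl | hx := eq_zero_or_pos x
    · exact bounded (x := y + 1) (y := 0) (by rw [IsPairC]; linear_combination h)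
    · obtain ⟨x, rfl⟩ := exists_add_of_le (Order.one_le_iff_pos.2 hx)
      exact bounded (x := x) (y := y + 1) (by rw [IsPairC]; linear_combination h)

theorem exists_eq_mul_add {m : M} (hm : 0 < m) (x : M) : ∃ q r, r < m ∧ x = q * m + r := by
  suffices ∃ q, q ≤ x ∧ ∃ r, r < m ∧ x = q * m + r from
    let ⟨q, _, r, h⟩ := this; ⟨q, r, h⟩
  refine delta0_induction (A := fun x => ∃ q, q ≤ x ∧ ∃ r, r < m ∧ x = q * m + r) ?_ ?_ x
  · exact ⟨0, le_rfl, 0, hm, by simp⟩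
  · rintro x ⟨q, hq, r, hr, rfl⟩
    obtain hr' | hr' := (Order.add_one_le_of_lt hr).lt_or_eq
    · exact ⟨q, hq.trans le_self_add, r + 1, hr', by ring⟩
    · exact ⟨q + 1, by gcongr, 0, hm, by linear_combination hr'⟩

theorem exists_seqAt (s i : M) : ∃ x, SeqAt s i x := by
  obtain ⟨a, b, hp⟩ := exists_unpair s
  obtain ⟨q, x, hx, hq⟩ := exists_eq_mul_add (Order.lt_add_one_iff.2 zero_le) a
  exact ⟨x, a, b, hp, hx, q, hq⟩

/-- The entry at position `i` of the sequence coded by `s`. In a model of IΣ₁ every element codes a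
total sequence, so that `SeqAt s i` is the graph of a function. -/
noncomputable def seqVal (s i : M) : M := (exists_seqAt s i).choose

theorem seqAt_iff_eq_seqVal {s i x : M} : SeqAt s i x ↔ x = seqVal s i :=
  have spec : SeqAt s i (seqVal s i) := (exists_seqAt s i).choose_spec
  ⟨fun h => h.unique spec, fun h => h ▸ spec⟩

theorem seqVal_le (s i : M) : seqVal s i ≤ s := (seqAt_iff_eq_seqVal.2 rfl).le

theorem codesFunOn (s a : M) : CodesFunOn s a :=
  fun i _ => ⟨exists_seqAt s i, fun _ _ => SeqAt.unique⟩

instance IsDelta0Fun.seqVal {n : ℕ} (F G : (Fin n → M) → M) [hF : IsDelta0Fun F] [IsDelta0Fun G] :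
    IsDelta0Fun fun v => seqVal (F v) (G v) where
  exists_bound := hF.exists_bound.imp fun _ ht v => (seqVal_le _ _).trans (ht v)
  graph := by
    simp only [← seqAt_iff_eq_seqVal]
    infer_instance

end Coding

section Comprehension

variable {M : Type} [lang.Structure M] [Fact (PAm M)]

-- With `t = (k + 1) * b`, we have `(k + 1) * ((j + 1) * b + 1) ≡ k - j` and `t * t ≡ 1` modulo
-- `t + 1`, and `k - j` divides `t`.
theorem exists_mul_modulus_eq {b n j k : M} (hb : 0 < b) (hn : ∀ d, d < n → d + 1 ∣ b)
    (hjk : j < k) (hk : k < n) :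
    ∃ v q, v * ((j + 1) * b + 1) = q * ((k + 1) * b + 1) + 1 := by
  obtain ⟨d, rfl⟩ := exists_add_of_le (Order.add_one_le_of_lt hjk)
  obtain ⟨e, rfl⟩ := hn d (le_add_self.trans_lt hk)
  obtain ⟨s, hs⟩ := exists_add_of_le <| Order.one_le_iff_pos.2 <|
    mul_pos (add_pos_of_nonneg_of_pos (zero_le (a := j + 1 + d)) one_pos) hb
  exact ⟨(j + 1 + d + 1) * (j + 1 + d + 1) * e * (1 + s),
    (j + 1) * (j + 1 + d + 1) * e * (1 + s) + s, by linear_combination hs⟩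

theorem BetaC.add_mul {A b i x P : M} (h : BetaC A b i x) (hP : (i + 1) * b + 1 ∣ P) (w : M) :
    BetaC (A + w * P) b i x := by
  obtain ⟨hx, q, rfl⟩ := h
  obtain ⟨p, rfl⟩ := hP
  exact ⟨hx, q + w * p, by ring⟩

variable [Fact (ISig 1 M)]

theorem exists_ge_forall_dvd (n B : M) : ∃ b, B ≤ b ∧ ∀ d, d < n → d + 1 ∣ b := by
  refine sigma1_induction (R := fun n b => B ≤ b ∧ ∀ d, d < n → d + 1 ∣ b) ⟨B, le_rfl, ?_⟩ ?_ n
  · exact fun d hd => (not_lt_zero hd).elim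
  · rintro n ⟨b, hB, hb⟩
    refine ⟨b * (n + 1), hB.trans (le_mul_of_one_le_right' le_add_self), fun d hd => ?_⟩
    obtain hd | rfl := (Order.lt_add_one_iff.1 hd).lt_or_eq
    · exact (hb d hd).mul_right _
    · exact dvd_mul_left _ _

theorem exists_dvd_modulus {b n k : M} (hb : 0 < b) (hn : ∀ d, d < n → d + 1 ∣ b) (hk : k < n) :
    ∃ P q, (∀ i, i < k → (i + 1) * b + 1 ∣ P) ∧ P = q * ((k + 1) * b + 1) + 1 := by
  suffices ∃ P, k ≤ k → (∀ i, i < k → (i + 1) * b + 1 ∣ P) ∧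
      ∃ q, q ≤ P ∧ P = q * ((k + 1) * b + 1) + 1 by
    obtain ⟨P, h⟩ := this
    obtain ⟨hP, q, -, hq⟩ := h le_rfl
    exact ⟨P, q, hP, hq⟩
  refine sigma1_induction (R := fun j P => j ≤ k → (∀ i, i < j → (i + 1) * b + 1 ∣ P) ∧
    ∃ q, q ≤ P ∧ P = q * ((k + 1) * b + 1) + 1) ?_ ?_ k
  · exact ⟨1, fun _ => ⟨fun i hi => (not_lt_zero hi).elim, 0, zero_le, by simp⟩⟩
  · rintro j ⟨P, h⟩
    obtain hjk | hjk := le_or_gt k j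
    · exact ⟨0, fun h => absurd (h.trans hjk) (lt_add_one j).not_ge⟩
    obtain ⟨hP, q, -, hq⟩ := h hjk.le
    obtain ⟨v, p, hv⟩ := exists_mul_modulus_eq hb hn hjk hk
    refine ⟨P * (v * ((j + 1) * b + 1)), fun _ => ⟨fun i hi => ?_, ?_⟩⟩
    · obtain hi | rfl := (Order.lt_add_one_iff.1 hi).lt_or_eq
      · exact (hP i hi).mul_right _
      · exact (dvd_mul_left _ _).mul_left _
    · have : P * (v * ((j + 1) * b + 1)) =
          (q * p * ((k + 1) * b + 1) + q + p) * ((k + 1) * b + 1) + 1 := by rw [hv, hq]; ring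
      exact ⟨_, this ▸ (le_mul_of_one_le_right' le_add_self).trans le_self_add, this⟩

theorem delta0_collection {R : M → M → Prop} [IsDelta0Def fun v : Fin 2 → M => R (v 0) (v 1)]
    (h : ∀ i, ∃ y, R i y) (n : M) : ∃ B, ∀ i, i < n → ∃ y, y < B ∧ R i y := by
  refine sigma1_induction (R := fun n B => ∀ i, i < n → ∃ y, y < B ∧ R i y) ?_ ?_ n
  · exact ⟨0, fun i hi => (not_lt_zero hi).elim⟩
  · rintro n ⟨B, hB⟩
    obtain ⟨y, hy⟩ := h n
    refine ⟨max B (y + 1), fun i hi => ?_⟩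
    obtain hi | rfl := (Order.lt_add_one_iff.1 hi).lt_or_eq
    · exact (hB i hi).imp fun z hz => ⟨lt_max_of_lt_left hz.1, hz.2⟩
    · exact ⟨y, lt_max_of_lt_right (lt_add_one y), hy⟩

theorem chinese_remainder_betaC {R : M → M → Prop} [IsDelta0Def fun v : Fin 2 → M => R (v 0) (v 1)]
    {n b : M} (hb : 0 < b) (hn : ∀ d, d < n → d + 1 ∣ b)
    (h : ∀ i, i < n → ∃ y, y < b ∧ R i y) : ∃ A, ∀ i, i < n → ∃ y, R i y ∧ BetaC A b i y := by
  suffices ∃ A, n ≤ n → ∀ i, i < n → ∃ y, y < b ∧ R i y ∧ BetaC A b i y by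
    obtain ⟨A, hA⟩ := this
    exact ⟨A, fun i hi => (hA le_rfl i hi).imp fun y hy => hy.2⟩
  refine sigma1_induction
    (R := fun k A => k ≤ n → ∀ i, i < k → ∃ y, y < b ∧ R i y ∧ BetaC A b i y) ?_ ?_ n
  · exact ⟨0, fun _ i hi => (not_lt_zero hi).elim⟩
  · rintro k ⟨A, hA⟩
    obtain hkn | hkn := le_or_gt n k
    · exact ⟨0, fun h => absurd (h.trans hkn) (lt_add_one k).not_ge⟩
    obtain ⟨P, q, hP, hq⟩ := exists_dvd_modulus hb hn hkn
    obtain ⟨y, hy, hR⟩ := h k hkn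
    refine ⟨A + (y + (k + 1) * b * A) * P, fun _ i hi => ?_⟩
    obtain hi | rfl := (Order.lt_add_one_iff.1 hi).lt_or_eq
    · obtain ⟨z, hz, hRz, hβ⟩ := hA hkn.le i hi
      exact ⟨z, hz, hRz, hβ.add_mul (hP i hi) _⟩
    · refine ⟨y, hy, hR, ?_, A + (y + (i + 1) * b * A) * q, by rw [hq]; ring⟩
      exact hy.trans_le ((le_mul_of_one_le_left' le_add_self).trans le_self_add)

theorem exists_forall_seqVal {R : M → M → Prop} [IsDelta0Def fun v : Fin 2 → M => R (v 0) (v 1)]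
    (h : ∀ i, ∃ y, R i y) (n : M) : ∃ s, ∀ i, i < n → R i (seqVal s i) := by
  obtain ⟨B, hB⟩ := delta0_collection h n
  obtain ⟨b, hBb, hb⟩ := exists_ge_forall_dvd n (B + 1)
  obtain ⟨A, hA⟩ := chinese_remainder_betaC (Order.one_le_iff_pos.1 (le_add_self.trans hBb)) hb
    fun i hi => (hB i hi).imp fun y hy => ⟨hy.1.trans_le (le_self_add.trans hBb), hy.2⟩
  obtain ⟨s, hs⟩ := exists_isPairC A b
  refine ⟨s, fun i hi => ?_⟩
  obtain ⟨y, hy, hβ⟩ := hA i hi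
  rwa [← seqAt_iff_eq_seqVal.1 ⟨A, b, hs, hβ⟩]

theorem exists_seqVal_append (s n x : M) :
    ∃ s', (∀ i, i < n → seqVal s' i = seqVal s i) ∧ seqVal s' n = x := by
  obtain ⟨s', hs'⟩ := exists_forall_seqVal
    (R := fun i y => (i < n → y = seqVal s i) ∧ (¬ i < n → y = x))
    (fun i => by by_cases hi : i < n <;> simp [hi]) (n + 1)
  exact ⟨s', fun i hi => (hs' i (hi.trans (lt_add_one n))).1 hi,
    (hs' n (lt_add_one n)).2 (lt_irrefl n)⟩

/-- The first `n` entries of `s` enumerate `{x | x < a ∧ P x}` in increasing order. All quantifiers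
are bounded, for definability. -/
def IsEnumeration (P : M → Prop) (a s n : M) : Prop :=
  (∀ j, j < n → ∀ i, i < j → seqVal s i < seqVal s j) ∧
    (∀ i, i < n → seqVal s i < a ∧ P (seqVal s i)) ∧
    ∀ x, x < a → P x → ∃ i, i < n ∧ x = seqVal s i

theorem isEnumeration_zero (P : M → Prop) (s : M) : IsEnumeration P 0 s 0 :=
  ⟨fun _ h => (not_lt_zero h).elim, fun _ h => (not_lt_zero h).elim,
    fun _ h => (not_lt_zero h).elim⟩

theorem IsEnumeration.skip {P : M → Prop} {a s n : M} (h : IsEnumeration P a s n) (ha : ¬ P a) :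
    IsEnumeration P (a + 1) s n := by
  obtain ⟨mono, mem, surj⟩ := h
  refine ⟨mono, fun i hi => (mem i hi).imp_left (·.trans (lt_add_one a)), fun x hx hPx => ?_⟩
  obtain hx | rfl := (Order.lt_add_one_iff.1 hx).lt_or_eq
  · exact surj x hx hPx
  · exact absurd hPx ha

theorem IsEnumeration.exists_append {P : M → Prop} {a s n : M} (h : IsEnumeration P a s n)
    (ha : P a) : ∃ s', IsEnumeration P (a + 1) s' (n + 1) := by
  obtain ⟨mono, mem, surj⟩ := h
  obtain ⟨s', eq_s, eq_a⟩ := exists_seqVal_append s n a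
  refine ⟨s', fun j hj i hij => ?_, fun i hi => ?_, fun x hx hPx => ?_⟩
  · obtain hj | rfl := (Order.lt_add_one_iff.1 hj).lt_or_eq
    · rw [eq_s i (hij.trans hj), eq_s j hj]
      exact mono j hj i hij
    · rw [eq_s i hij, eq_a]
      exact (mem i hij).1
  · obtain hi | rfl := (Order.lt_add_one_iff.1 hi).lt_or_eq
    · rw [eq_s i hi]
      exact (mem i hi).imp_left (·.trans (lt_add_one a))
    · rw [eq_a]
      exact ⟨lt_add_one a, ha⟩
  · obtain hx | rfl := (Order.lt_add_one_iff.1 hx).lt_or_eq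
    · obtain ⟨i, hi, rfl⟩ := surj x hx hPx
      exact ⟨i, hi.trans (lt_add_one n), (eq_s i hi).symm⟩
    · exact ⟨n, lt_add_one n, eq_a.symm⟩

theorem exists_isEnumeration (P : M → Prop) [IsDelta0Def fun v : Fin 1 → M => P (v 0)] (a : M) :
    ∃ s n, IsEnumeration P a s n := by
  suffices ∃ s, ∃ n, n ≤ a ∧ IsEnumeration P a s n from this.imp fun _ => .imp fun _ => And.right
  refine sigma1_induction (R := fun a s => ∃ n, n ≤ a ∧ IsEnumeration P a s n)
    (hR := by unfold IsEnumeration; infer_instance) ?_ ?_ a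
  · exact ⟨0, 0, le_rfl, isEnumeration_zero P 0⟩
  · rintro a ⟨s, n, hn, h⟩
    by_cases ha : P a
    · obtain ⟨s', h'⟩ := h.exists_append ha
      exact ⟨s', n + 1, by gcongr, h'⟩
    · exact ⟨s, n, hn.trans le_self_add, h.skip ha⟩

theorem mCodedSubset_setOf (P : M → Prop) [IsDelta0Def fun v : Fin 1 → M => P (v 0)] (a : M) :
    MCodedSubset a {x | x < a ∧ P x} := by
  obtain ⟨s, n, mono, mem, surj⟩ := exists_isEnumeration P a
  obtain ⟨c, hc⟩ := exists_isPairC n s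
  refine ⟨⟨c, n, s, hc, fun i hi => ?_, fun i j x y hij hj hx hy => ?_,
    fun x => ⟨fun hx => ?_, ?_⟩⟩, fun x hx => hx.1⟩
  · exact ⟨_, mem i hi, seqAt_iff_eq_seqVal.2 rfl⟩
  · rw [seqAt_iff_eq_seqVal.1 hx, seqAt_iff_eq_seqVal.1 hy]
    exact mono j hj i hij
  · exact (surj x hx.1 hx.2).imp fun i hi => hi.imp_right seqAt_iff_eq_seqVal.2
  · rintro ⟨i, hi, hx⟩
    exact seqAt_iff_eq_seqVal.1 hx ▸ mem i hi

end Comprehension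

section Ultrapower

open Filter

variable {M : Type} [lang.Structure M] {a : M}

/-- The filter on `M` generated by an `M`-ultrafilter. It makes the calculus of `∀ᶠ` available;
it is an ultrafilter only for Δ₀-definable sets. -/
def MUltra.filter (U : MUltra M a) : Filter M where
  sets := {S | ∃ X ∈ U.sets, X ⊆ S}
  univ_sets := ⟨_, U.univ_mem, Set.subset_univ _⟩
  sets_of_superset := fun ⟨X, hX, hXS⟩ h => ⟨X, hX, hXS.trans h⟩
  inter_sets := fun ⟨X, hX, hXS⟩ ⟨Y, hY, hYT⟩ =>
    ⟨X ∩ Y, U.inter_mem X Y hX hY, Set.inter_subset_inter hXS hYT⟩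

instance (U : MUltra M a) : U.filter.NeBot := by
  refine ⟨fun h => ?_⟩
  obtain ⟨X, hX, hX'⟩ : ∅ ∈ U.filter := h ▸ mem_bot
  exact U.empty_not_mem (Set.subset_empty_iff.1 hX' ▸ hX)

theorem MUltra.eventually_lt (U : MUltra M a) : ∀ᶠ x in U.filter, x < a :=
  ⟨_, U.univ_mem, Set.Subset.rfl⟩

variable [Fact (PAm M)] [Fact (ISig 1 M)] (U : MUltra M a)

theorem MUltra.setOf_mem_iff (P : M → Prop) [IsDelta0Def fun v : Fin 1 → M => P (v 0)] :
    {x | x < a ∧ P x} ∈ U.sets ↔ ∀ᶠ x in U.filter, P x := by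
  refine ⟨fun h => ⟨_, h, fun x hx => hx.2⟩, fun ⟨X, hX, hXP⟩ => ?_⟩
  exact U.superset_mem X _ hX (mCodedSubset_setOf P a)
    fun x hx => ⟨(U.mem_coded X hX).2 x hx, hXP hx⟩

theorem MUltra.eventually_or_eventually_not (P : M → Prop)
    [IsDelta0Def fun v : Fin 1 → M => P (v 0)] :
    (∀ᶠ x in U.filter, P x) ∨ ∀ᶠ x in U.filter, ¬ P x := by
  refine (U.ultra _ (mCodedSubset_setOf P a)).imp (U.setOf_mem_iff P).1 fun h => ?_
  exact ⟨_, h, fun x hx hPx => hx.2 ⟨hx.1, hPx⟩⟩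

theorem MUltra.exists_eventually_seqVal {R : M → M → Prop}
    [IsDelta0Def fun v : Fin 2 → M => R (v 0) (v 1)] (h : ∀ x, ∃ y, R x y) :
    ∃ s, ∀ᶠ x in U.filter, R x (seqVal s x) :=
  (exists_forall_seqVal h a).imp fun _ hs => U.eventually_lt.mono hs

theorem MUltra.exists_seqVal_eventuallyEq (F : M → M)
    [IsDelta0Fun fun v : Fin 1 → M => F (v 0)] : ∃ s, seqVal s =ᶠ[U.filter] F :=
  U.exists_eventually_seqVal (R := fun x y => y = F x) fun x => ⟨F x, rfl⟩

/-- Germs along `U` of the functions coded in `M`. -/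
def codedGerms : Subsemiring (Germ U.filter M) where
  carrier := Set.range fun s => ↑(seqVal s)
  zero_mem' := (U.exists_seqVal_eventuallyEq fun _ => 0).imp fun _ => Germ.coe_eq.2
  one_mem' := (U.exists_seqVal_eventuallyEq fun _ => 1).imp fun _ => Germ.coe_eq.2
  add_mem' := by
    rintro _ _ ⟨s, rfl⟩ ⟨t, rfl⟩
    exact (U.exists_seqVal_eventuallyEq fun x => seqVal s x + seqVal t x).imp
      fun _ => Germ.coe_eq.2
  mul_mem' := by
    rintro _ _ ⟨s, rfl⟩ ⟨t, rfl⟩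
    exact (U.exists_seqVal_eventuallyEq fun x => seqVal s x * seqVal t x).imp
      fun _ => Germ.coe_eq.2

/-- The ultrapower `Ult_U(M)`, built from coded functions only. -/
def Ultrapower : Type := codedGerms U

namespace Ultrapower

noncomputable instance : lang.Structure (Ultrapower U) where
  funMap {_} f := match f with
    | .zero => fun _ => (0 : codedGerms U)
    | .one => fun _ => (1 : codedGerms U)
    | .add => fun v => Add.add (α := codedGerms U) (v 0) (v 1)
    | .mul => fun v => Mul.mul (α := codedGerms U) (v 0) (v 1)
  RelMap {_} r := match r with
    | .lt => fun v => Germ.LiftRel (· < ·) (v 0).1 (v 1).1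

/-- The class of a Δ₀ function, which agrees below `a` with a coded one. -/
def mk (F : M → M) [IsDelta0Fun fun v : Fin 1 → M => F (v 0)] : Ultrapower U :=
  ⟨F, (U.exists_seqVal_eventuallyEq F).imp fun _ => Germ.coe_eq.2⟩

variable {U}

theorem mk_seqVal_surjective : Function.Surjective fun s => mk U (seqVal s) :=
  fun z => z.2.imp fun _ => Subtype.ext

section

variable {F G : M → M} [IsDelta0Fun fun v : Fin 1 → M => F (v 0)]
  [IsDelta0Fun fun v : Fin 1 → M => G (v 0)]

theorem mk_eq_mk_iff : mk U F = mk U G ↔ ∀ᶠ x in U.filter, F x = G x :=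
  Subtype.ext_iff.trans Germ.coe_eq

theorem mk_lt_mk_iff : mk U F < mk U G ↔ ∀ᶠ x in U.filter, F x < G x := Iff.rfl

theorem setOf_eq_mem_iff : {x | x < a ∧ F x = G x} ∈ U.sets ↔ mk U F = mk U G :=
  (U.setOf_mem_iff fun x => F x = G x).trans mk_eq_mk_iff.symm

theorem setOf_lt_mem_iff : {x | x < a ∧ F x < G x} ∈ U.sets ↔ mk U F < mk U G :=
  (U.setOf_mem_iff fun x => F x < G x).trans mk_lt_mk_iff.symm

theorem mk_le_mk (h : ∀ᶠ x in U.filter, F x ≤ G x) : mk U F ≤ mk U G := by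
  obtain hlt | hnot := U.eventually_or_eventually_not fun x => F x < G x
  · exact Or.inl hlt
  · exact Or.inr (mk_eq_mk_iff.2 ((h.and hnot).mono fun x hx => eq_of_le_of_not_lt hx.1 hx.2))

theorem mk_lt_trichotomy : mk U F < mk U G ∨ mk U F = mk U G ∨ mk U G < mk U F := by
  obtain hlt | hnot := U.eventually_or_eventually_not fun x => F x < G x
  · exact Or.inl hlt
  · exact Or.inr ((mk_le_mk (hnot.mono fun x => le_of_not_gt)).symm.imp_left Eq.symm)

theorem exists_mk_add_eq_mk (h : mk U F < mk U G) : ∃ z, mk U F + z = mk U G := by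
  obtain ⟨s, hs⟩ := U.exists_eventually_seqVal (R := fun x y => F x < G x → F x + y = G x)
    fun x => by
      by_cases hx : F x < G x
      · exact (exists_add_of_le hx.le).imp fun y hy _ => hy.symm
      · exact ⟨0, fun h => absurd h hx⟩
  exact ⟨mk U (seqVal s), mk_eq_mk_iff.2 ((hs.and h).mono fun x hx => hx.1 hx.2)⟩

end

instance : Fact (PAm (Ultrapower U)) where
  out := {
    add_assoc := add_assoc (G := codedGerms U)
    add_comm := add_comm (G := codedGerms U)
    mul_assoc := mul_assoc (G := codedGerms U)
    mul_comm := mul_comm (G := codedGerms U)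
    ldistrib := mul_add (R := codedGerms U)
    add_zero := add_zero (M := codedGerms U)
    mul_zero := mul_zero (M₀ := codedGerms U)
    mul_one := mul_one (M := codedGerms U)
    lt_trans := mk_seqVal_surjective.forall₃.2 fun _ _ _ hst htu =>
      mk_lt_mk_iff.2 ((mk_lt_mk_iff.1 hst).mp ((mk_lt_mk_iff.1 htu).mono fun _ => gt_trans))
    lt_irrefl := mk_seqVal_surjective.forall.2 fun _ h =>
      (mk_lt_mk_iff.1 h).exists.elim fun _ => lt_irrefl _
    lt_total := mk_seqVal_surjective.forall₂.2 fun _ _ => mk_lt_trichotomy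
    add_lt_add := mk_seqVal_surjective.forall₃.2 fun _ _ _ h =>
      mk_lt_mk_iff.2 ((mk_lt_mk_iff.1 h).mono fun _ h => add_lt_add_left h _)
    mul_lt_mul := mk_seqVal_surjective.forall₃.2 fun _ _ _ h hpos =>
      mk_lt_mk_iff.2 ((mk_lt_mk_iff.1 h).mp ((mk_lt_mk_iff.1 hpos).mono fun _ hpos h =>
        mul_lt_mul_of_pos_right h hpos))
    sub_exists := mk_seqVal_surjective.forall₂.2 fun _ _ => exists_mk_add_eq_mk
    zero_lt_one := mk_lt_mk_iff.2 (.of_forall fun _ => one_pos)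
    discrete := mk_seqVal_surjective.forall.2 fun _ h =>
      mk_le_mk ((mk_lt_mk_iff.1 h).mono fun _ => Order.one_le_iff_pos.2)
    zero_le := mk_seqVal_surjective.forall.2 fun _ => mk_le_mk (.of_forall fun _ => zero_le)
  }

variable (U) in
/-- The embedding of `M` by constant functions. -/
def const (x : M) : Ultrapower U := mk U fun _ => x

variable (U) in
/-- The class of the identity, which is the element at which coded functions are evaluated. -/
def generator : Ultrapower U := mk U fun x => x

theorem const_injective : Function.Injective (const U) := fun _ _ h =>
  eventually_const.1 (mk_eq_mk_iff.1 h)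

theorem const_lt_const_iff {x y : M} : const U x < const U y ↔ x < y :=
  mk_lt_mk_iff.trans eventually_const

theorem const_add (x y : M) : const U (x + y) = const U x + const U y := rfl

theorem const_mul (x y : M) : const U (x * y) = const U x * const U y := rfl

theorem exists_le_const (z : Ultrapower U) : ∃ x, z ≤ const U x := by
  obtain ⟨s, rfl⟩ := mk_seqVal_surjective z
  exact ⟨s, mk_le_mk (.of_forall (seqVal_le s))⟩

theorem isPairC_const {z x y : M} (h : IsPairC z x y) :
    IsPairC (const U z) (const U x) (const U y) :=
  congrArg (const U) h

theorem betaC_generator {A b s : M} (h : ∀ x, BetaC A b x (seqVal s x)) :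
    BetaC (const U A) (const U b) (generator U) (mk U (seqVal s)) := by
  obtain ⟨q, hq⟩ := U.exists_eventually_seqVal
    (R := fun x q => A = q * ((x + 1) * b + 1) + seqVal s x) fun x => (h x).2
  exact ⟨mk_lt_mk_iff.2 (.of_forall fun x => (h x).1), mk U (seqVal q), mk_eq_mk_iff.2 hq⟩

theorem seqAt_generator_iff {s : M} {z : Ultrapower U} :
    SeqAt (const U s) (generator U) z ↔ z = mk U (seqVal s) := by
  have value : SeqAt (const U s) (generator U) (mk U (seqVal s)) := by
    obtain ⟨A, b, hs⟩ := exists_unpair s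
    refine ⟨_, _, isPairC_const hs, betaC_generator fun x => ?_⟩
    obtain ⟨A', b', hs', hβ⟩ := seqAt_iff_eq_seqVal.2 (rfl : seqVal s x = seqVal s x)
    obtain ⟨rfl, rfl⟩ := hs.inj hs'
    exact hβ
  exact ⟨fun h => h.unique value, fun h => h ▸ value⟩

end Ultrapower

end Ultrapower

/-- If `M ⊨ PA⁻ + IΣ₁` and `U` is an `M`-ultrafilter on `0 < a ∈ M`,
then there are `N` and `c ∈ N` such that `M` is (via `g`) a cofinal substructure of
`N`, every element of `N` is of the form `f(c)` for an `M`-coded function `f` with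
domain `[0,a)` (values at `c` computed in `N`), and `[f]_U ↦ f(c)` is a well-defined
bijection from `Ult_U(M)` onto `N` commuting with `0, 1, +, ·, <` — i.e. an
isomorphism from the ultrapower onto `N`. -/
theorem statement_12 (M : Type) [lang.Structure M] (hPA : PAm M) (hI : ISig 1 M)
    (a : M) (ha : (0 : M) < a) (U : MUltra M a) :
    ∃ (N : Type) (_ : lang.Structure N) (g : M → N) (c : N),
      -- `g` realizes `M` as a substructure of `N`:
      Function.Injective g ∧
      g 0 = 0 ∧ g 1 = 1 ∧
      (∀ x y : M, g (x + y) = g x + g y) ∧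
      (∀ x y : M, g (x * y) = g x * g y) ∧
      (∀ x y : M, x < y ↔ g x < g y) ∧
      -- the extension is cofinal:
      (∀ z : N, ∃ x : M, z ≤ g x) ∧
      -- every element of `N` is `f(c)` for some coded `f`:
      (∀ z : N, ∃ f : M, CodesFunOn f a ∧ SeqAt (g f) c z) ∧
      -- `f(c)` is defined and unique in `N` for each coded `f`:
      (∀ f : M, CodesFunOn f a → ∃ z : N, SeqAt (g f) c z ∧ ∀ z', SeqAt (g f) c z' → z' = z) ∧
      -- `[f]_U ↦ f(c)` is well defined and injective:
      (∀ f f' : M, CodesFunOn f a → CodesFunOn f' a →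
        ({x : M | x < a ∧ ∃ y, SeqAt f x y ∧ SeqAt f' x y} ∈ U.sets ↔
          ∀ z z' : N, SeqAt (g f) c z → SeqAt (g f') c z' → z = z')) ∧
      -- it transports the order of `Ult_U(M)` to that of `N`:
      (∀ f f' : M, CodesFunOn f a → CodesFunOn f' a →
        ({x : M | x < a ∧ ∃ y y', SeqAt f x y ∧ SeqAt f' x y' ∧ y < y'} ∈ U.sets ↔
          ∃ z z' : N, SeqAt (g f) c z ∧ SeqAt (g f') c z' ∧ z < z')) ∧
      -- it transports pointwise addition:
      (∀ f f' h : M, CodesFunOn f a → CodesFunOn f' a → CodesFunOn h a →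
        {x : M | x < a ∧ ∃ y y', SeqAt f x y ∧ SeqAt f' x y' ∧ SeqAt h x (y + y')} ∈ U.sets →
          ∀ z z' w : N, SeqAt (g f) c z → SeqAt (g f') c z' → SeqAt (g h) c w →
            z + z' = w) ∧
      -- it transports pointwise multiplication:
      (∀ f f' h : M, CodesFunOn f a → CodesFunOn f' a → CodesFunOn h a →
        {x : M | x < a ∧ ∃ y y', SeqAt f x y ∧ SeqAt f' x y' ∧ SeqAt h x (y * y')} ∈ U.sets →
          ∀ z z' w : N, SeqAt (g f) c z → SeqAt (g f') c z' → SeqAt (g h) c w →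
            z * z' = w) ∧
      -- it transports the constants 0 and 1:
      (∀ f : M, CodesFunOn f a → {x : M | x < a ∧ SeqAt f x 0} ∈ U.sets →
        SeqAt (g f) c (0 : N)) ∧
      (∀ f : M, CodesFunOn f a → {x : M | x < a ∧ SeqAt f x 1} ∈ U.sets →
        SeqAt (g f) c (1 : N)) := by
  have : Fact (PAm M) := ⟨hPA⟩
  have : Fact (ISig 1 M) := ⟨hI⟩
  refine ⟨Ultrapower U, inferInstance, .const U, .generator U, Ultrapower.const_injective,
    rfl, rfl, Ultrapower.const_add, Ultrapower.const_mul,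
    fun _ _ => Ultrapower.const_lt_const_iff.symm, Ultrapower.exists_le_const, ?_⟩
  simp only [Ultrapower.seqAt_generator_iff, seqAt_iff_eq_seqVal, forall_eq, exists_eq_left,
    codesFunOn, forall_const, true_and, exists_and_left]
  refine ⟨fun z => (Ultrapower.mk_seqVal_surjective z).imp fun _ => Eq.symm, fun f f' => ?_,
    fun f f' => Ultrapower.setOf_lt_mem_iff, fun f f' h hmem => ?_, fun f f' h hmem => ?_,
    fun f => Ultrapower.setOf_eq_mem_iff.1, fun f => Ultrapower.setOf_eq_mem_iff.1⟩
  · exact Ultrapower.setOf_eq_mem_iff.trans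
      ⟨fun h _ _ hz hz' => hz.trans (h.trans hz'.symm), fun h => h _ _ rfl rfl⟩
  · rintro _ _ _ rfl rfl rfl
    exact Ultrapower.setOf_eq_mem_iff.1 hmem
  · rintro _ _ _ rfl rfl rfl
    exact Ultrapower.setOf_eq_mem_iff.1 hmem

end ArithFC
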